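/- Let K = K_0, 0 ≤ r ≤ p-1, and let M ∈ 'FL^fr_{W(k)} be a finite free Fontaine-Laffaille module (not necessarily strong). Then M satisfies the strongness condition Σ_{i=0}^r φ_i(Fil^i M) = M if and only if the associated module M_S(M) = S ⊗_{W(k)} M satisfies the strong divisibility condition that φ_r(Fil^r(S⊗M)) generates S⊗M over S (i.e., M_S(M) ∈ Mod_S^{φ,N,cris}). -/

import Mathlib

/-!
Common axiomatized setting for the note "Fontaine-Laffaille modules and strongly
divisible modules" (H. Gao).  We axiomatize the Breuil ring `S` (the `p`-adic
completion of the divided power envelope of `W(k)[u]` with respect to `(E(u))`),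
Fontaine-Laffaille modules, strongly divisible `S`-lattices, Kisin modules, and
the relevant period rings, together with all the structure maps and axioms
described in the paper.
-/

open scoped TensorProduct

noncomputable section

namespace FLSD

/-- Axiomatization of the Breuil ring `S`: the `p`-adic completion of the divided power
envelope of `W[u]` with respect to the ideal generated by the Eisenstein polynomial `E(u)`,
together with its Frobenius `φ` (semilinear over the Frobenius `σ` of `W = W(k)`),
the `W`-linear derivation `N` with `N u = -u`, the divided-power filtration `Fil^j S`
(with divided powers `dpow n = E(u)^n/n!`), the divided Frobenii `φdiv j = φ/p^j` on
`Fil^j S` (for `j ≤ p-1`), and the unit `c = φ(E(u))/p`. -/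
structure BreuilRingData (p : ℕ) (W : Type) [CommRing W] (σ : W →+* W) : Type 1 where
  S : Type
  [commRing : CommRing S]
  [algebra : Algebra W S]
  /-- the image of the variable `u` in `S` -/
  u : S
  /-- the image of the Eisenstein polynomial `E(u)` in `S` -/
  E : S
  /-- the Frobenius of `S` -/
  φ : S →+* S
  φ_algebraMap : ∀ w : W, φ (algebraMap W S w) = algebraMap W S (σ w)
  φ_u : φ u = u ^ p
  /-- the monodromy operator `N_S`, the `W`-linear derivation with `N_S u = -u` -/
  N : S →ₗ[W] S
  N_mul : ∀ x y : S, N (x * y) = x * N y + y * N x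
  N_u : N u = -u
  N_u_dvd : ∀ s : S, u ∣ N s
  /-- the divided power filtration `Fil^j S` -/
  Fil : ℕ → Ideal S
  Fil_zero : Fil 0 = ⊤
  Fil_antitone : ∀ i, Fil (i + 1) ≤ Fil i
  Fil_mul : ∀ i j, ∀ x ∈ Fil i, ∀ y ∈ Fil j, x * y ∈ Fil (i + j)
  E_mem : E ∈ Fil 1
  E_pow_mem : ∀ n, E ^ n ∈ Fil n
  /-- the divided powers `γ_n(E(u)) = E(u)^n/n!` -/
  dpow : ℕ → S
  dpow_mem : ∀ n, dpow n ∈ Fil n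
  dpow_spec : ∀ n, (n.factorial : S) * dpow n = E ^ n
  N_Fil : ∀ n, ∀ x ∈ Fil (n + 1), N x ∈ Fil n
  /-- `S` is `p`-torsion free -/
  p_torsionfree : ∀ x : S, (p : S) * x = 0 → x = 0
  /-- the divided Frobenius `φ_j = φ/p^j` on `Fil^j S`, for `j ≤ p - 1` -/
  φdiv : ℕ → S → S
  φdiv_spec : ∀ j, j + 1 ≤ p → ∀ x ∈ Fil j, (p : S) ^ j * φdiv j x = φ x
  /-- `c = φ(E(u))/p`, a unit of `S` -/
  c : S
  c_spec : (p : S) * c = φ E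
  c_unit : IsUnit c

attribute [instance] BreuilRingData.commRing BreuilRingData.algebra

/-- The extra structure available on the Breuil ring `S` in the unramified case `K = K₀`:
the Eisenstein polynomial has the form `E(u) = u + p a` with `a ∈ W(k)ˣ`, the element
`u^p/p` lies in `S`, and we have the `W`-algebra homomorphisms `f₀ : S → W(k)` (with
`u ↦ 0`) and `f_π : S → O_K = W(k)` (with `u ↦ π`, so `f_π (E(u)) = 0`). -/
structure UnramBreuilRingData (p : ℕ) (W : Type) [CommRing W] (σ : W →+* W)
    extends BreuilRingData p W σ where
  a : W
  aInv : W
  a_mul_aInv : a * aInv = 1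
  E_eq : E = u + (p : S) * algebraMap W S a
  /-- `u^p/p ∈ S` -/
  upDivP : S
  upDivP_spec : (p : S) * upDivP = u ^ p
  /-- the `W`-algebra homomorphism `f₀ : S → W`, `u ↦ 0` -/
  f0 : S →+* W
  f0_algebraMap : ∀ w : W, f0 (algebraMap W S w) = w
  f0_u : f0 u = 0
  /-- the `W`-algebra homomorphism `f_π : S → O_K = W`, `u ↦ π` -/
  fπ : S →+* W
  fπ_algebraMap : ∀ w : W, fπ (algebraMap W S w) = w
  fπ_E : fπ E = 0
  fπ_Fil : ∀ n, 1 ≤ n → ∀ x ∈ Fil n, fπ x = 0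

/-- The partial products `A · φ(A) · φ²(A) ⋯ φⁿ(A)` of the `σ`-twists of a matrix `A`. -/
def phiProd {R : Type} [CommRing R] (σ : R →+* R) {d : ℕ}
    (A : Matrix (Fin d) (Fin d) R) : ℕ → Matrix (Fin d) (Fin d) R
  | 0 => A
  | n + 1 => phiProd σ A n * A.map (fun x => (⇑σ)^[n + 1] x)

/-- A sequence of matrices tends to `0` for the `I`-adic topology. -/
def matTendstoZero {R : Type} [CommRing R] (I : Ideal R) {d : ℕ}
    (P : ℕ → Matrix (Fin d) (Fin d) R) : Prop :=
  ∀ m : ℕ, ∃ n₀ : ℕ, ∀ n ≥ n₀, ∀ i j, P n i j ∈ I ^ m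

/-- The recursively defined "canonical induced filtration":
`hatFil^0 = everything`, and `hatFil^{n+1} = {x | N x ∈ hatFil^n ∧ f_π x ∈ Fil^{n+1} M}`. -/
def hatFilSet {T M : Type} (Nop : T → T) (fp : T → M) (FilM : ℕ → Set M) : ℕ → Set T
  | 0 => Set.univ
  | n + 1 => {x | Nop x ∈ hatFilSet Nop fp FilM n ∧ fp x ∈ FilM (n + 1)}

/-! ### Fontaine-Laffaille modules -/

/-- A (finite free, not necessarily strong) Fontaine-Laffaille module over `W = W(k)`
(with Frobenius `σ`), with Hodge-Tate range `[0, r]`: a finite free `W`-module `M` with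
a decreasing filtration `Fil^i M` (each `Fil^{i+1} M` a direct summand of `Fil^i M`,
`Fil^0 M = M`, `Fil^{r+1} M = 0`) and `σ`-semilinear maps `φ_i : Fil^i M → M` with
`φ_i|_{Fil^{i+1} M} = p · φ_{i+1}`.  This is the category `'FL^fr_{W(k)}`. -/
structure FLModule (p r : ℕ) (W : Type) [CommRing W] (σ : W →+* W) : Type 1 where
  M : Type
  [addCommGroup : AddCommGroup M]
  [module : Module W M]
  free : Module.Free W M
  finite : Module.Finite W M
  Fil : ℕ → Submodule W M
  Fil_zero : Fil 0 = ⊤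
  Fil_antitone : ∀ i, Fil (i + 1) ≤ Fil i
  Fil_vanish : Fil (r + 1) = ⊥
  Fil_summand : ∀ i, ∃ C : Submodule W M,
    C ≤ Fil i ∧ Fil (i + 1) ⊓ C = ⊥ ∧ Fil (i + 1) ⊔ C = Fil i
  φ : ∀ i : ℕ, Fil i →ₛₗ[σ] M
  φ_succ : ∀ i (x : M) (hx : x ∈ Fil (i + 1)),
    φ i ⟨x, Fil_antitone i hx⟩ = (p : W) • φ (i + 1) ⟨x, hx⟩

attribute [instance] FLModule.addCommGroup FLModule.module

variable {p r : ℕ} {W : Type} [CommRing W] {σ : W →+* W}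

/-- The Frobenius `φ = φ_0 : M → M` of a Fontaine-Laffaille module. -/
def FLModule.Φ (M : FLModule p r W σ) (x : M.M) : M.M :=
  M.φ 0 ⟨x, by rw [M.Fil_zero]; exact Submodule.mem_top⟩

/-- The strongness condition `Σ_{i=0}^r φ_i(Fil^i M) = M` defining `FL^fr_{W(k)}`
inside `'FL^fr_{W(k)}`. -/
def FLModule.Strong (M : FLModule p r W σ) : Prop :=
  AddSubgroup.closure
    (⋃ i ∈ Finset.range (r + 1), Set.range fun x : M.Fil i => M.φ i x) = ⊤

/-- Morphisms of Fontaine-Laffaille modules: `W`-linear maps compatible with the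
filtrations and with all the `φ_i`. -/
structure FLHom (M₁ M₂ : FLModule p r W σ) where
  toFun : M₁.M →ₗ[W] M₂.M
  map_fil : ∀ i, ∀ x ∈ M₁.Fil i, toFun x ∈ M₂.Fil i
  map_φ : ∀ i (x : M₁.Fil i), toFun (M₁.φ i x) = M₂.φ i ⟨toFun x.1, map_fil i x.1 x.2⟩

/-- A Fontaine-Laffaille module is étale if `Fil^r M = M`. -/
def FLModule.Etale (M : FLModule p r W σ) : Prop := M.Fil r = ⊤

/-- A Fontaine-Laffaille module is unipotent if it has no nonzero étale quotient (quotients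
being taken in short exact sequences which are exact on all filtration pieces). -/
def FLModule.Unipotent (M : FLModule p r W σ) : Prop :=
  ∀ (M₂ : FLModule p r W σ) (f : FLHom M M₂), Function.Surjective f.toFun →
    (∀ i, Submodule.map f.toFun (M.Fil i) = M₂.Fil i) → M₂.Etale → Subsingleton M₂.M

/-- A sub-object of a Fontaine-Laffaille module: a `W`-submodule stable under all the `φ_i`
(with the induced filtration `Fil^i N' = N' ∩ Fil^i M`). -/
def FLModule.SubStable (M : FLModule p r W σ) (N' : Submodule W M.M) : Prop :=
  ∀ i (x : M.M) (hx : x ∈ M.Fil i), x ∈ N' → M.φ i ⟨x, hx⟩ ∈ N'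

/-- A sub-object is multiplicative if its induced `Fil^1` vanishes; a Fontaine-Laffaille
module is nilpotent if it has no nonzero multiplicative sub-object. -/
def FLModule.Nilpotent (M : FLModule p r W σ) : Prop :=
  ∀ N' : Submodule W M.M, M.SubStable N' → N' ⊓ M.Fil 1 = ⊥ → N' = ⊥

end FLSD
/-! ### Strongly divisible modules -/

namespace FLSD

variable {p r : ℕ} {W : Type} [CommRing W] {σ : W →+* W}

/-- An object of `'Mod_S^φ` (of weight `≤ r`): a finite free `S`-module `𝓜` with a
submodule `Fil^r 𝓜 ⊇ Fil^r S · 𝓜` such that `𝓜/Fil^r 𝓜` is `p`-torsion free, together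
with the `φ`-semilinear map `φ_r : Fil^r 𝓜 → 𝓜` satisfying
`φ_r(s x) = c^{-r} φ_r(s) φ_r(E(u)^r x)` for `s ∈ Fil^r S`, and the associated Frobenius
`φ = c^{-r} φ_r(E(u)^r ·) : 𝓜 → 𝓜` (so that `φ = p^r φ_r` on `Fil^r 𝓜`). -/
structure SPhiModule (p r : ℕ) {W : Type} [CommRing W] {σ : W →+* W}
    (D : BreuilRingData p W σ) : Type 1 where
  M : Type
  [addCommGroup : AddCommGroup M]
  [module : Module D.S M]
  free : Module.Free D.S M
  finite : Module.Finite D.S M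
  /-- `Fil^r 𝓜` -/
  Fil : Submodule D.S M
  smul_mem_fil : ∀ s ∈ D.Fil r, ∀ x : M, s • x ∈ Fil
  quot_p_torsionfree : ∀ x : M, (p : D.S) • x ∈ Fil → x ∈ Fil
  /-- the divided Frobenius `φ_r : Fil^r 𝓜 → 𝓜` -/
  φr : Fil →ₛₗ[D.φ] M
  /-- the Frobenius `φ : 𝓜 → 𝓜`, determined by `φ(x) = c^{-r} φ_r(E(u)^r x)` -/
  φtot : M →ₛₗ[D.φ] M
  φtot_spec : ∀ x : M,
    D.c ^ r • φtot x = φr ⟨D.E ^ r • x, smul_mem_fil _ (D.E_pow_mem r) x⟩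
  φr_spec : ∀ x : Fil, φtot x.1 = (p : D.S) ^ r • φr x
  φr_div : ∀ s (hs : s ∈ D.Fil r) (x : M),
    D.c ^ r • φr ⟨s • x, smul_mem_fil s hs x⟩ =
      D.φdiv r s • φr ⟨D.E ^ r • x, smul_mem_fil _ (D.E_pow_mem r) x⟩

attribute [instance] SPhiModule.addCommGroup SPhiModule.module

variable {D : BreuilRingData p W σ}

/-- The condition that `φ_r(Fil^r 𝓜)` generates `𝓜` over `S` (defining `Mod_S^φ`
inside `'Mod_S^φ`). -/
def SPhiModule.Gen (𝓜 : SPhiModule p r D) : Prop :=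
  Submodule.span D.S (Set.range 𝓜.φr) = ⊤

/-- `𝓜` is étale if `Fil^r 𝓜 = 𝓜`. -/
def SPhiModule.Etale (𝓜 : SPhiModule p r D) : Prop := 𝓜.Fil = ⊤

/-- `𝓜` is multiplicative if `Fil^r 𝓜 = Fil^r S · 𝓜`. -/
def SPhiModule.Mult (𝓜 : SPhiModule p r D) : Prop :=
  𝓜.Fil = D.Fil r • (⊤ : Submodule D.S 𝓜.M)

/-- Morphisms in `'Mod_S^φ`: `S`-linear maps preserving `Fil^r` and commuting with `φ_r`. -/
structure SPhiHom (𝓜₁ 𝓜₂ : SPhiModule p r D) where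
  toFun : 𝓜₁.M →ₗ[D.S] 𝓜₂.M
  map_fil : ∀ x ∈ 𝓜₁.Fil, toFun x ∈ 𝓜₂.Fil
  map_φr : ∀ x : 𝓜₁.Fil, toFun (𝓜₁.φr x) = 𝓜₂.φr ⟨toFun x.1, map_fil x.1 x.2⟩

/-- `𝓜` is unipotent if it has no nonzero étale quotient (quotients in short exact
sequences of `S`-modules which are also exact on the filtrations). -/
def SPhiModule.Unipotent (𝓜 : SPhiModule p r D) : Prop :=
  ∀ (𝓝 : SPhiModule p r D) (f : SPhiHom 𝓜 𝓝), Function.Surjective f.toFun →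
    Submodule.map f.toFun 𝓜.Fil = 𝓝.Fil → 𝓝.Etale → Subsingleton 𝓝.M

/-- An object of `'Mod_S^{φ,N}`: an object of `'Mod_S^φ` with a monodromy operator `N`
satisfying the Leibniz rule over `N_S`, Griffiths transversality
`E(u) N(Fil^r 𝓜) ⊆ Fil^r 𝓜`, and `φ_r(E(u) N x) = c N (φ_r x)`.  Objects with
`Gen` (i.e. `φ_r(Fil^r 𝓜)` generating) are the strongly divisible `S`-lattices. -/
structure SDivModule (p r : ℕ) {W : Type} [CommRing W] {σ : W →+* W}
    (D : BreuilRingData p W σ) extends SPhiModule p r D where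
  N : M → M
  N_add : ∀ x y, N (x + y) = N x + N y
  N_leibniz : ∀ (s : D.S) (x : M), N (s • x) = D.N s • x + s • N x
  N_fil : ∀ x ∈ Fil, D.E • N x ∈ Fil
  N_φr : ∀ (x : M) (hx : x ∈ Fil), φr ⟨D.E • N x, N_fil x hx⟩ = D.c • N (φr ⟨x, hx⟩)

/-- The condition `N(𝓜) ⊆ u 𝓜` cutting out `Mod_S^{φ,N,cris}` inside `Mod_S^{φ,N}`. -/
def SDivModule.Cris (𝓜 : SDivModule p r D) : Prop :=
  ∀ x : 𝓜.M, ∃ y : 𝓜.M, 𝓜.N x = D.u • y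

/-- Morphisms in `'Mod_S^{φ,N}`: morphisms in `'Mod_S^φ` commuting with `N`. -/
structure SDivHom (𝓜₁ 𝓜₂ : SDivModule p r D)
    extends SPhiHom 𝓜₁.toSPhiModule 𝓜₂.toSPhiModule where
  map_N : ∀ x, toFun (𝓜₁.N x) = 𝓜₂.N (toFun x)

/-- The submodule `u 𝓜 ⊆ 𝓜`. -/
def SDivModule.uSub (𝓜 : SDivModule p r D) : Submodule D.S 𝓜.M :=
  Ideal.span {D.u} • (⊤ : Submodule D.S 𝓜.M)

/-- The quotient `M = 𝓜 / u 𝓜`. -/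
abbrev SDivModule.Quot (𝓜 : SDivModule p r D) : Type := 𝓜.M ⧸ 𝓜.uSub

/-- The projection `𝓜 → 𝓜 / u 𝓜`. -/
def SDivModule.prQ (𝓜 : SDivModule p r D) : 𝓜.M →ₗ[D.S] 𝓜.Quot := 𝓜.uSub.mkQ

/-- A `φ`-equivariant (`W`-linear) section `s : M = 𝓜/u𝓜 → 𝓜` of the projection
`𝓜 → 𝓜/u𝓜`, where `M = 𝓜/u𝓜` carries the Frobenius induced by `φ = φ_𝓜`. -/
structure IsSection (𝓜 : SDivModule p r D) (sec : 𝓜.Quot → 𝓜.M) : Prop where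
  map_add : ∀ q q', sec (q + q') = sec q + sec q'
  map_wsmul : ∀ (w : W) (q : 𝓜.Quot),
    sec (algebraMap W D.S w • q) = algebraMap W D.S w • sec q
  is_section : ∀ q, 𝓜.prQ (sec q) = q
  φ_equiv : ∀ x : 𝓜.M, sec (𝓜.prQ (𝓜.φtot x)) = 𝓜.φtot (sec (𝓜.prQ x))

/-- The tensor product filtration `Fil^n_⊗ (S ⊗_W M) = Σ_{i+j=n} Fil^i S ⊗_W Fil^j M`. -/
def filTensorGen (D : BreuilRingData p W σ) (M : Type) [AddCommGroup M] [Module W M]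
    (FilM : ℕ → Submodule W M) (n : ℕ) : Submodule D.S (D.S ⊗[W] M) :=
  ⨆ i ∈ Finset.range (n + 1), Submodule.span D.S
    {x : D.S ⊗[W] M | ∃ s ∈ D.Fil i, ∃ m ∈ FilM (n - i), x = s ⊗ₜ[W] m}

/-- The statement that a strongly divisible module `𝓜` realizes `M_S(M) = S ⊗_{W(k)} M`
for a Fontaine-Laffaille module `M`: an `S`-linear isomorphism
`j : S ⊗_W M ≅ 𝓜` carrying `φ_S ⊗ φ_0` to `φ_𝓜`, `N_S ⊗ 1` to `N_𝓜`, and the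
tensor product filtration `Σ_{i=0}^r Fil^{r-i} S ⊗ Fil^i M` to `Fil^r 𝓜`
(the divided Frobenius `φ_r` is then automatically `Σ_{i=0}^r φ_{r-i,S} ⊗ φ_{i,M}`,
since `φ_r = φ/p^r`). -/
structure IsMS (M : FLModule p r W σ) (𝓜 : SDivModule p r D) where
  j : (D.S ⊗[W] M.M) ≃ₗ[D.S] 𝓜.M
  map_φ : ∀ (s : D.S) (m : M.M), 𝓜.φtot (j (s ⊗ₜ[W] m)) = j (D.φ s ⊗ₜ[W] M.Φ m)
  map_N : ∀ (s : D.S) (m : M.M), 𝓜.N (j (s ⊗ₜ[W] m)) = j (D.N s ⊗ₜ[W] m)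
  map_fil : 𝓜.Fil = Submodule.map j.toLinearMap (filTensorGen D M.M M.Fil r)

end FLSD
namespace FLSD

variable {p r : ℕ} {W : Type} [CommRing W] {σ : W →+* W}

/-- `f_π : S → W` as a `W`-linear map (unramified case). -/
def UnramBreuilRingData.fπLin (D : UnramBreuilRingData p W σ) : D.S →ₗ[W] W where
  toFun := D.fπ
  map_add' x y := map_add _ x y
  map_smul' w s := by
    simp only [RingHom.id_apply, smul_eq_mul, Algebra.smul_def, map_mul, D.fπ_algebraMap]

/-- The map `f_π : S ⊗_W M → M`, `s(u) ⊗ x ↦ s(π) x` (identifying `M` with `f_π(𝓜)`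
via `x ↦ 1 ⊗ x`). -/
def UnramBreuilRingData.fπT (D : UnramBreuilRingData p W σ) (M : Type) [AddCommGroup M]
    [Module W M] : (D.S ⊗[W] M) →ₗ[W] M :=
  TensorProduct.lift ((LinearMap.lsmul W M).comp D.fπLin)

variable {D : UnramBreuilRingData p W σ}

/-- The data entering the definition of the functor `M_FL` for
`𝓜 ∈ Mod_S^{φ,N,cris}` (with `M = 𝓜/u𝓜`):
* the filtration `filD i = 𝓜 ∩ Fil^i (𝓜[1/p])` induced from the canonical (Breuil)
  filtration of `𝓓 = 𝓜[1/p]`, with its standard properties (it is decreasing,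
  `p`-saturated, satisfies `Fil^i S · filD j ⊆ filD (i+j)`, `N(filD (i+1)) ⊆ filD i`,
  `filD r = Fil^r 𝓜`), and the canonical recursive description
  `x ∈ filD (n+1) ↔ (N x ∈ filD n ∧ f_π x ∈ Fil^{n+1} M)` coming from the canonical
  filtration on `𝓓` (where `Fil^{n+1} M := f_π(filD (n+1))`);
* the unique `φ`-equivariant section `s : M → 𝓜` (which induces `S ⊗_W M ≅ 𝓜`);
* the induced projection `f_π : 𝓜 → M` determined by `f_π(a • s(q)) = f_π(a) • q`. -/
structure MFLData (𝓜 : SDivModule p r D.toBreuilRingData) where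
  filD : ℕ → Submodule D.S 𝓜.M
  filD_zero : filD 0 = ⊤
  filD_antitone : ∀ i, filD (i + 1) ≤ filD i
  filD_r : filD r = 𝓜.Fil
  filD_sat : ∀ i (x : 𝓜.M), (p : D.S) • x ∈ filD i → x ∈ filD i
  filD_smul : ∀ i j, ∀ s ∈ D.Fil i, ∀ x ∈ filD j, s • x ∈ filD (i + j)
  filD_N : ∀ i, ∀ x ∈ filD (i + 1), 𝓜.N x ∈ filD i
  sec : 𝓜.Quot → 𝓜.M
  sec_isSection : IsSection 𝓜 sec
  sec_span : Submodule.span D.S (Set.range sec) = ⊤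
  fπM : 𝓜.M → 𝓜.Quot
  fπM_add : ∀ x y, fπM (x + y) = fπM x + fπM y
  fπM_sec : ∀ (s : D.S) (q : 𝓜.Quot), fπM (s • sec q) = algebraMap W D.S (D.fπ s) • q
  filD_canon : ∀ n (x : 𝓜.M), x ∈ filD (n + 1) ↔
    (𝓜.N x ∈ filD n ∧ fπM x ∈ fπM '' (filD (n + 1) : Set 𝓜.M))

/-- Given `MFLData` for `𝓜`, the tensor product filtration on `𝓜 ≅ S ⊗_W M`:
`Fil^n_⊗ 𝓜 = Σ_{i+j=n} Fil^i S • s(Fil^j M)` where `Fil^j M = f_π(filD j)`. -/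
def MFLData.filT {𝓜 : SDivModule p r D.toBreuilRingData} (h : MFLData 𝓜) (n : ℕ) :
    Submodule D.S 𝓜.M :=
  ⨆ i ∈ Finset.range (n + 1), Submodule.span D.S
    {x : 𝓜.M | ∃ s ∈ D.Fil i, ∃ q ∈ h.fπM '' (h.filD (n - i) : Set 𝓜.M),
      x = s • h.sec q}

/-- Given `MFLData` for `𝓜`, the canonical induced filtration
`hatFil^0 𝓜 = 𝓜`, `hatFil^{n+1} 𝓜 = {x | N x ∈ hatFil^n 𝓜 ∧ f_π x ∈ Fil^{n+1} M}`. -/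
def MFLData.hatFil {𝓜 : SDivModule p r D.toBreuilRingData} (h : MFLData 𝓜) : ℕ → Set 𝓜.M :=
  hatFilSet 𝓜.N h.fπM (fun n => h.fπM '' (h.filD n : Set 𝓜.M))

/-- The statement that a Fontaine-Laffaille module `M'` realizes `M_FL(𝓜)` for a strongly
divisible module `𝓜 ∈ Mod_S^{φ,N,cris}`: the underlying module of `M'` is `M = 𝓜/u𝓜`
with the induced Frobenius, and `Fil^i M' = Fil^i M := f_π(Fil^i 𝓜)`. -/
structure IsMFLRep (𝓜 : SDivModule p r D.toBreuilRingData) (M' : FLModule p r W σ)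
    extends MFLData 𝓜 where
  e : M'.M → 𝓜.Quot
  e_bij : Function.Bijective e
  e_add : ∀ x y, e (x + y) = e x + e y
  e_smul : ∀ (w : W) (x : M'.M), e (w • x) = algebraMap W D.S w • e x
  e_fil : ∀ i, e '' (M'.Fil i : Set M'.M) = fπM '' (filD i : Set 𝓜.M)
  e_φ : ∀ x : M'.M, e (M'.Φ x) = 𝓜.prQ (𝓜.φtot (sec (e x)))

end FLSD
namespace FLSD

/-! ### Galois representations and period rings (axiomatized) -/

/-- A `G`-stable `ℤ_p`-lattice: a finite free `ℤ_p`-module with a `G`-action. -/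
structure ZpGRep (p : ℕ) [Fact p.Prime] (G : Type) [Group G] : Type 1 where
  T : Type
  [addCommGroup : AddCommGroup T]
  [module : Module ℤ_[p] T]
  free : Module.Free ℤ_[p] T
  finite : Module.Finite ℤ_[p] T
  ρ : Representation ℤ_[p] G T

attribute [instance] ZpGRep.addCommGroup ZpGRep.module

/-- Morphisms of `ℤ_p[G]`-lattices: `ℤ_p`-linear `G`-equivariant maps. -/
structure ZpGRepHom {p : ℕ} [Fact p.Prime] {G : Type} [Group G] (R₁ R₂ : ZpGRep p G) where
  toFun : R₁.T →ₗ[ℤ_[p]] R₂.T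
  equivariant : ∀ (g : G) (x : R₁.T), toFun (R₁.ρ g x) = R₂.ρ g (toFun x)

variable {p r : ℕ} {W : Type} [CommRing W] {σ : W →+* W}

/-- Axiomatization of the Galois-theoretic input: the absolute Galois group `G = G_K`,
Fontaine's crystalline period ring `A_cris` (with its Frobenius `φ`, filtration
`Fil^i A_cris`, divided Frobenii `φ_i = φ/p^i`, and `G`-action), Breuil's period ring
`Â_st` (an `S`-algebra with `Fil^r`, divided Frobenius `φ_r`, monodromy `N`, and
`G`-action), and the predicates from (rational) `p`-adic Hodge theory singling out the
`G`-stable `ℤ_p`-lattices in crystalline (resp. semi-stable) representations with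
Hodge-Tate weights in `[0, r]`, and the unipotent ones. -/
structure PeriodData (p r : ℕ) [Fact p.Prime] {W : Type} [CommRing W] {σ : W →+* W}
    (D : BreuilRingData p W σ) : Type 1 where
  G : Type
  [group : Group G]
  Acris : Type
  [AcrisCommRing : CommRing Acris]
  [AcrisAlgW : Algebra W Acris]
  [AcrisAlgZp : Algebra ℤ_[p] Acris]
  φA : Acris →+* Acris
  FilA : ℕ → Ideal Acris
  FilA_zero : FilA 0 = ⊤
  FilA_antitone : ∀ i, FilA (i + 1) ≤ FilA i
  φdivA : ℕ → Acris → Acris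
  φdivA_spec : ∀ j, j + 1 ≤ p → ∀ x ∈ FilA j, (p : Acris) ^ j * φdivA j x = φA x
  gA : G →* RingAut Acris
  Ast : Type
  [AstCommRing : CommRing Ast]
  [AstAlgS : Algebra D.S Ast]
  [AstAlgZp : Algebra ℤ_[p] Ast]
  /-- `Fil^r Â_st` -/
  FilAst : Submodule D.S Ast
  /-- the divided Frobenius `φ_r` of `Â_st` -/
  φrAst : Ast → Ast
  /-- the monodromy operator of `Â_st` -/
  NAst : Ast → Ast
  gAst : G →* RingAut Ast
  /-- the predicate "`T` is a `G`-stable `ℤ_p`-lattice in a crystalline representation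
  with Hodge-Tate weights in `[0,r]`" -/
  IsCrystallineLattice : ZpGRep p G → Prop
  /-- the predicate "`T` is a `G`-stable `ℤ_p`-lattice in a semi-stable representation
  with Hodge-Tate weights in `[0,r]`" -/
  IsSemistableLattice : ZpGRep p G → Prop
  /-- the predicate "`T` is a lattice in a unipotent representation (i.e. whose
  weakly admissible filtered `(φ,N)`-module has no nonzero étale quotient)" -/
  IsUnipotentLattice : ZpGRep p G → Prop

attribute [instance] PeriodData.group PeriodData.AcrisCommRing PeriodData.AcrisAlgW
  PeriodData.AcrisAlgZp PeriodData.AstCommRing PeriodData.AstAlgS PeriodData.AstAlgZp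

variable {D : BreuilRingData p W σ} [Fact p.Prime]

/-- The underlying set of `T^*_cris(M) = Hom_{W(k),φ_i,Fil^i}(M, A_cris)`:
`W`-linear maps compatible with the filtrations and all divided Frobenii. -/
def TcrisSet (M : FLModule p r W σ) (P : PeriodData p r D) : Set (M.M → P.Acris) :=
  {f | (∀ x y, f (x + y) = f x + f y) ∧
       (∀ (w : W) (x : M.M), f (w • x) = algebraMap W P.Acris w * f x) ∧
       (∀ i, ∀ x ∈ M.Fil i, f x ∈ P.FilA i) ∧
       (∀ i (x : M.Fil i), f (M.φ i x) = P.φdivA i (f x.1))}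

/-- The underlying set of `T_st(𝓜) = Hom_{'Mod_S^{φ,N}}(𝓜, Â_st)`:
`S`-linear maps compatible with `Fil^r`, `φ_r` and `N`. -/
def TstSet (𝓜 : SDivModule p r D) (P : PeriodData p r D) : Set (𝓜.M → P.Ast) :=
  {f | (∀ x y, f (x + y) = f x + f y) ∧
       (∀ (s : D.S) (x : 𝓜.M), f (s • x) = algebraMap D.S P.Ast s * f x) ∧
       (∀ x ∈ 𝓜.Fil, f x ∈ P.FilAst) ∧
       (∀ x : 𝓜.Fil, f (𝓜.φr x) = P.φrAst (f x.1)) ∧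
       (∀ x, f (𝓜.N x) = P.NAst (f x))}

/-- The statement that a `ℤ_p[G]`-lattice `R` realizes `T^*_cris(M)` (with `G` acting on
`Hom(M, A_cris)` through its action on `A_cris`). -/
structure IsTcrisRep (M : FLModule p r W σ) (P : PeriodData p r D) (R : ZpGRep p P.G) where
  e : R.T →ₗ[ℤ_[p]] (M.M → P.Acris)
  inj : Function.Injective e
  range : Set.range e = TcrisSet M P
  equivariant : ∀ (g : P.G) (t : R.T) (x : M.M), e (R.ρ g t) x = P.gA g (e t x)

/-- The statement that a `ℤ_p[G]`-lattice `R` realizes `T_st(𝓜)` (with `G` acting on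
`Hom(𝓜, Â_st)` through its action on `Â_st`). -/
structure IsTstRep (𝓜 : SDivModule p r D) (P : PeriodData p r D) (R : ZpGRep p P.G) where
  e : R.T →ₗ[ℤ_[p]] (𝓜.M → P.Ast)
  inj : Function.Injective e
  range : Set.range e = TstSet 𝓜 P
  equivariant : ∀ (g : P.G) (t : R.T) (x : 𝓜.M), e (R.ρ g t) x = P.gAst g (e t x)

/-! ### Kisin modules -/

/-- A finite free Kisin module of `E(u)`-height `r` over `𝔖 = W[[u]]`, with Frobenius `φ_𝔖`
(acting as `σ` on `W` and `u ↦ u^p`): the cokernel of the linearization `1 ⊗ φ` is killed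
by `E(u)^r`, i.e. `E(u)^r 𝔐 ⊆ ⟨φ(𝔐)⟩`. -/
structure KisinModule (p r : ℕ) (W : Type) [CommRing W]
    (φS : PowerSeries W →+* PowerSeries W) (Eg : PowerSeries W) : Type 1 where
  M : Type
  [addCommGroup : AddCommGroup M]
  [module : Module (PowerSeries W) M]
  free : Module.Free (PowerSeries W) M
  finite : Module.Finite (PowerSeries W) M
  φ : M →ₛₗ[φS] M
  height : ∀ x : M, Eg ^ r • x ∈ Submodule.span (PowerSeries W) (Set.range φ)

attribute [instance] KisinModule.addCommGroup KisinModule.module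

variable {φS : PowerSeries W →+* PowerSeries W} {Eg : PowerSeries W}

/-- A Kisin module is étale if `⟨(1⊗φ)(𝔖 ⊗_{φ,𝔖} 𝔐)⟩ = E(u)^r 𝔐`. -/
def KisinModule.Etale (𝔐 : KisinModule p r W φS Eg) : Prop :=
  Submodule.span (PowerSeries W) (Set.range 𝔐.φ) =
    Ideal.span {Eg ^ r} • (⊤ : Submodule (PowerSeries W) 𝔐.M)

/-- Morphisms of Kisin modules: `φ`-compatible `𝔖`-module homomorphisms. -/
structure KisinHom (𝔐₁ 𝔐₂ : KisinModule p r W φS Eg) where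
  toFun : 𝔐₁.M →ₗ[PowerSeries W] 𝔐₂.M
  map_φ : ∀ x, toFun (𝔐₁.φ x) = 𝔐₂.φ (toFun x)

/-- A Kisin module is unipotent if it has no nonzero étale quotient. -/
def KisinModule.Unipotent (𝔐 : KisinModule p r W φS Eg) : Prop :=
  ∀ (𝔑 : KisinModule p r W φS Eg) (f : KisinHom 𝔐 𝔑), Function.Surjective f.toFun →
    𝔑.Etale → Subsingleton 𝔑.M

end FLSD
namespace FLSD

/-!
Let `L ⊆ M` be the `W`-span of the images `φ_i(Fil^i M)`.  Since `p^r φ_r = φ_S ⊗ φ_0` and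
`S ⊗ M` has no `p`-torsion, `φ_r(s ⊗ m) = φ_i(s) • (1 ⊗ φ_{r-i}(m))` for `s ∈ Fil^i S` and
`m ∈ Fil^{r-i} M`; for `s = E(u)^i` the coefficient is the unit `c^i`.  Hence `φ_r(Fil^r(S ⊗ M))`
spans exactly `S ⊗ L`.  As `W → S` is split, `S ⊗ L = S ⊗ M` if and only if `L = M`.
-/

section Module

variable {R : Type*} [CommRing R] {M : Type*} [AddCommGroup M] [Module R M]

theorem span_toAddSubgroup_eq_closure {s : Set M} (hs : ∀ (a : R), ∀ x ∈ s, a • x ∈ s) :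
    (Submodule.span R s).toAddSubgroup = AddSubgroup.closure s := by
  refine (AddSubgroup.closure_eq_of_le _ Submodule.subset_span fun x hx => ?_).symm
  induction hx using Submodule.closure_induction with
  | zero => exact zero_mem _
  | add x y _ _ hx hy => exact add_mem hx hy
  | smul_mem a x hx => exact AddSubgroup.subset_closure (hs a x hx)

theorem baseChange_eq_top_iff {A : Type*} [CommRing A] [Algebra R A] (ε : A →ₗ[R] R)
    (hε : ε 1 = 1) {N : Submodule R M} : N.baseChange A = ⊤ ↔ N = ⊤ := by
  refine ⟨fun hN => eq_top_iff.2 fun m _ => ?_, fun hN => hN ▸ Submodule.baseChange_top A⟩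
  obtain ⟨t, ht⟩ : (1 : A) ⊗ₜ[R] m ∈ N.baseChange A := hN ▸ Submodule.mem_top
  have retract_mem (t : A ⊗[R] N) :
      TensorProduct.lid R M (ε.rTensor M (N.subtype.baseChange A t)) ∈ N := by
    induction t with
    | zero => simp
    | add x y hx hy => simpa only [map_add] using add_mem hx hy
    | tmul a n => simpa using N.smul_mem (ε a) n.2
  simpa [ht, hε] using retract_mem t

end Module

section BreuilRing

variable {p : ℕ} {W : Type} [CommRing W] {σ : W →+* W} (D : BreuilRingData p W σ)

theorem BreuilRingData.isRegular_p_pow (n : ℕ) : IsRegular ((p : D.S) ^ n) :=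
  have isRegular_p : IsRegular (p : D.S) :=
    isRegular_iff_mem_nonZeroDivisors.2 (mem_nonZeroDivisors_iff_left.2 D.p_torsionfree)
  isRegular_p.pow n

theorem BreuilRingData.φdiv_E_pow {n : ℕ} (hn : n < p) : D.φdiv n (D.E ^ n) = D.c ^ n := by
  apply (D.isRegular_p_pow n).left
  change (p : D.S) ^ n * _ = (p : D.S) ^ n * _
  rw [D.φdiv_spec n hn _ (D.E_pow_mem n), map_pow, ← D.c_spec, mul_pow]

variable {D}

theorem SPhiModule.isSMulRegular_p_pow {r : ℕ} (𝓜 : SPhiModule p r D) (n : ℕ) :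
    IsSMulRegular 𝓜.M ((p : D.S) ^ n) :=
  have := 𝓜.free
  Module.Flat.isSMulRegular_of_isRegular (D.isRegular_p_pow n)

end BreuilRing

section FontaineLaffaille

variable {p r : ℕ} {W : Type} [CommRing W] {σ : W →+* W} (M : FLModule p r W σ)

theorem FLModule.Φ_eq_p_pow_smul_φ {n : ℕ} {x : M.M} (hx : x ∈ M.Fil n) :
    M.Φ x = (p : W) ^ n • M.φ n ⟨x, hx⟩ := by
  induction n with
  | zero => simp [FLModule.Φ]
  | succ n ih => rw [ih (M.Fil_antitone n hx), M.φ_succ n x hx, smul_smul, pow_succ]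

/-- The `W`-submodule of `M` generated by the images `φ_i(Fil^i M)` for `0 ≤ i ≤ r`.  The
condition `FLModule.Strong` refers to the additive subgroup generated by the same images. -/
def FLModule.φSpan : Submodule W M.M :=
  Submodule.span W (⋃ i ∈ Finset.range (r + 1), Set.range (M.φ i))

variable {M}

theorem FLModule.φ_mem_φSpan {i : ℕ} (hi : i ≤ r) (x : M.Fil i) : M.φ i x ∈ M.φSpan :=
  Submodule.subset_span (Set.mem_biUnion (Finset.mem_range_succ_iff.2 hi) ⟨x, rfl⟩)

theorem FLModule.strong_iff_φSpan_eq_top (hσ : Function.Surjective σ) :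
    M.Strong ↔ M.φSpan = ⊤ := by
  have smul_mem : ∀ (w : W), ∀ x ∈ ⋃ i ∈ Finset.range (r + 1), Set.range (M.φ i),
      w • x ∈ ⋃ i ∈ Finset.range (r + 1), Set.range (M.φ i) := by
    simp only [Set.mem_iUnion]
    rintro w _ ⟨i, hi, y, rfl⟩
    obtain ⟨v, rfl⟩ := hσ w
    exact ⟨i, hi, v • y, map_smulₛₗ (M.φ i) v y⟩
  rw [FLModule.Strong, FLModule.φSpan, ← span_toAddSubgroup_eq_closure smul_mem,
    ← Submodule.top_toAddSubgroup (R := W), Submodule.toAddSubgroup_inj]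

end FontaineLaffaille

namespace IsMS

variable {p r : ℕ} {W : Type} [CommRing W] {σ : W →+* W} {D : BreuilRingData p W σ}
  {M : FLModule p r W σ} {𝓜 : SDivModule p r D}

theorem cris (h : IsMS M 𝓜) : 𝓜.Cris := by
  intro x
  obtain ⟨t, rfl⟩ := h.j.surjective x
  induction t with
  | zero => exact ⟨0, by simpa using map_zero (AddMonoidHom.mk' 𝓜.N 𝓜.N_add)⟩
  | add x y hx hy =>
    obtain ⟨a, ha⟩ := hx
    obtain ⟨b, hb⟩ := hy
    exact ⟨a + b, by rw [map_add, 𝓜.N_add, ha, hb, smul_add]⟩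
  | tmul s m =>
    obtain ⟨v, hv⟩ := D.N_u_dvd s
    exact ⟨h.j (v ⊗ₜ m), by
      rw [h.map_N, hv, ← map_smul, TensorProduct.smul_tmul', smul_eq_mul]⟩

theorem fil_eq_span (h : IsMS M 𝓜) :
    𝓜.Fil = Submodule.span D.S {x | ∃ i n, i + n = r ∧
      ∃ s ∈ D.Fil i, ∃ m ∈ M.Fil n, h.j (s ⊗ₜ[W] m) = x} := by
  simp only [h.map_fil, filTensorGen, ← Submodule.span_iUnion, Submodule.map_span]
  congr 1
  ext x
  simp only [Set.mem_image, Set.mem_iUnion, Finset.mem_range_succ_iff, Set.mem_ofPred_eq]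
  constructor
  · rintro ⟨_, ⟨i, hi, s, hs, m, hm, rfl⟩, rfl⟩
    exact ⟨i, r - i, Nat.add_sub_of_le hi, s, hs, m, hm, rfl⟩
  · rintro ⟨i, n, rfl, s, hs, m, hm, rfl⟩
    exact ⟨_, ⟨i, Nat.le_add_right i n, s, hs, m, by rwa [Nat.add_sub_cancel_left], rfl⟩, rfl⟩

theorem tmul_mem_fil (h : IsMS M 𝓜) {i n : ℕ} (hin : i + n = r) {s : D.S} (hs : s ∈ D.Fil i)
    {m : M.M} (hm : m ∈ M.Fil n) : h.j (s ⊗ₜ[W] m) ∈ 𝓜.Fil := by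
  rw [h.fil_eq_span]
  exact Submodule.subset_span ⟨i, n, hin, s, hs, m, hm, rfl⟩

theorem φr_tmul (h : IsMS M 𝓜) (hr : r < p) {i n : ℕ} (hin : i + n = r) {s : D.S}
    (hs : s ∈ D.Fil i) {m : M.M} (hm : m ∈ M.Fil n) :
    𝓜.φr ⟨h.j (s ⊗ₜ[W] m), h.tmul_mem_fil hin hs hm⟩ =
      D.φdiv i s • h.j (1 ⊗ₜ[W] M.φ n ⟨m, hm⟩) := by
  have smul_tmul : ∀ x : M.M, ((p : D.S) ^ i * D.φdiv i s) ⊗ₜ[W] ((p : W) ^ n • x) =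
      (p : D.S) ^ r • D.φdiv i s • (1 : D.S) ⊗ₜ[W] x := fun x => by
    rw [← TensorProduct.smul_tmul, TensorProduct.smul_tmul', TensorProduct.smul_tmul',
      Algebra.smul_def, map_pow, map_natCast, smul_eq_mul, smul_eq_mul, mul_one, ← mul_assoc,
      ← pow_add, add_comm n, hin]
  apply 𝓜.isSMulRegular_p_pow r
  change (p : D.S) ^ r • _ = (p : D.S) ^ r • _
  rw [← 𝓜.φr_spec, h.map_φ, M.Φ_eq_p_pow_smul_φ hm, ← D.φdiv_spec i (by omega) s hs,
    smul_tmul, map_smul, map_smul]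

theorem φr_E_pow_tmul (h : IsMS M 𝓜) (hr : r < p) {i n : ℕ} (hin : i + n = r) {m : M.M}
    (hm : m ∈ M.Fil n) :
    𝓜.φr ⟨h.j ((D.E ^ i) ⊗ₜ[W] m), h.tmul_mem_fil hin (D.E_pow_mem i) hm⟩ =
      D.c ^ i • h.j (1 ⊗ₜ[W] M.φ n ⟨m, hm⟩) := by
  rw [h.φr_tmul hr hin (D.E_pow_mem i) hm, D.φdiv_E_pow (by omega)]

theorem φr_mem_map_baseChange (h : IsMS M 𝓜) (hr : r < p) (x : 𝓜.Fil) :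
    𝓜.φr x ∈ (M.φSpan.baseChange D.S).map h.j.toLinearMap := by
  set B := (M.φSpan.baseChange D.S).map h.j.toLinearMap
  have fil_le : 𝓜.Fil ≤ (B.comap 𝓜.φr).map 𝓜.Fil.subtype := by
    refine h.fil_eq_span.le.trans (Submodule.span_le.2 ?_)
    rintro _ ⟨i, n, hin, s, hs, m, hm, rfl⟩
    refine ⟨⟨_, h.tmul_mem_fil hin hs hm⟩, ?_, rfl⟩
    rw [SetLike.mem_coe, Submodule.mem_comap, h.φr_tmul hr hin hs hm]
    exact B.smul_mem _ (Submodule.mem_map_of_mem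
      (Submodule.tmul_mem_baseChange_of_mem 1 (M.φ_mem_φSpan (by omega) _)))
  obtain ⟨y, hy, hyx⟩ := fil_le x.2
  rwa [← Subtype.ext hyx]

theorem tmul_φ_mem_span_range_φr (h : IsMS M 𝓜) (hr : r < p) {n : ℕ} (hn : n ≤ r)
    (m : M.Fil n) :
    h.j (1 ⊗ₜ[W] M.φ n m) ∈ Submodule.span D.S (Set.range 𝓜.φr) := by
  rw [← Submodule.smul_mem_iff_of_isUnit _ (D.c_unit.pow (r - n)),
    ← h.φr_E_pow_tmul hr (Nat.sub_add_cancel hn) m.2]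
  exact Submodule.subset_span ⟨_, rfl⟩

theorem span_range_φr (h : IsMS M 𝓜) (hr : r < p) :
    Submodule.span D.S (Set.range 𝓜.φr) =
      (M.φSpan.baseChange D.S).map h.j.toLinearMap := by
  apply le_antisymm
  · exact Submodule.span_le.2 (Set.range_subset_iff.2 (h.φr_mem_map_baseChange hr))
  · rw [FLModule.φSpan, Submodule.baseChange_span, Submodule.map_span, Submodule.span_le]
    rintro _ ⟨_, ⟨x, hx, rfl⟩, rfl⟩
    simp only [Set.mem_iUnion, Finset.mem_range_succ_iff] at hx
    obtain ⟨n, hn, m, rfl⟩ := hx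
    exact h.tmul_φ_mem_span_range_φr hr hn m

theorem gen_iff_baseChange_φSpan_eq_top (h : IsMS M 𝓜) (hr : r < p) :
    𝓜.Gen ↔ M.φSpan.baseChange D.S = ⊤ := by
  rw [SPhiModule.Gen, h.span_range_φr hr]
  exact Submodule.map_eq_top_iff (e := h.j)

end IsMS

theorem statement_5_general {p r : ℕ} (hr : r < p) {W : Type} [CommRing W] {σ : W →+* W}
    (hσ : Function.Surjective σ) {D : BreuilRingData p W σ} (ε : D.S →ₗ[W] W) (hε : ε 1 = 1)
    {M : FLModule p r W σ} {𝓜 : SDivModule p r D} (h : IsMS M 𝓜) :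
    M.Strong ↔ (SPhiModule.Gen 𝓜.toSPhiModule ∧ 𝓜.Cris) := by
  rw [FLModule.strong_iff_φSpan_eq_top hσ, h.gen_iff_baseChange_φSpan_eq_top hr,
    baseChange_eq_top_iff ε hε, and_iff_left h.cris]

/-- Lemma 3.2 of the paper.  Let `K = K₀`, `0 ≤ r ≤ p - 1`, and let
`M ∈ 'FL^fr_{W(k)}` be a finite free Fontaine-Laffaille module (not necessarily strong).
Then `M` satisfies the strongness condition `Σ_{i=0}^r φ_i(Fil^i M) = M` if and only if
the associated module `M_S(M) = S ⊗_{W(k)} M` satisfies the strong divisibility condition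
that `φ_r(Fil^r (S ⊗ M))` generates `S ⊗ M` over `S` (i.e. `M_S(M) ∈ Mod_S^{φ,N,cris}`,
the condition `N(M_S(M)) ⊆ u · M_S(M)` being automatic). -/
theorem statement_5 (p : ℕ) [Fact p.Prime]
    (k : Type) [Field k] [CharP k p] [PerfectRing k p]
    (r : ℕ) (hr : r ≤ p - 1)
    (D : UnramBreuilRingData p (WittVector p k)
      (WittVector.frobenius : WittVector p k →+* WittVector p k))
    (M : FLModule p r (WittVector p k) WittVector.frobenius)
    (𝓜 : SDivModule p r D.toBreuilRingData) (h : IsMS M 𝓜) :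
    M.Strong ↔ (SPhiModule.Gen 𝓜.toSPhiModule ∧ 𝓜.Cris) := by
  have hp : 0 < p := (Fact.out : p.Prime).pos
  exact statement_5_general (by omega) (WittVector.frobenius_bijective p k).surjective D.fπLin
    (map_one D.fπ) h

end FLSD
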